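/- (Lemma 4.2(1), pointwise form.) Let φ ∈ Δ be a unit spinor. Then the trilinear form Φ_φ on ℝ^7 is alternating, and the cross product it defines satisfies (x×y)·φ = −x·y·φ − ⟨x,y⟩·φ for all x, y ∈ ℝ^7. -/

import Mathlib

open RealInnerProductSpace

noncomputable section

/-- The spin representation space Δ = ℝ^8. -/
abbrev Δ : Type := EuclideanSpace ℝ (Fin 8)

/-- The standard skew endomorphism E_{ij} of ℝ^8: u_i ↦ u_j, u_j ↦ -u_i, others ↦ 0. -/
def E (i j : Fin 8) : Δ →ₗ[ℝ] Δ where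
  toFun v := v i • EuclideanSpace.single j (1 : ℝ) - v j • EuclideanSpace.single i (1 : ℝ)
  map_add' x y := by
    simp only [PiLp.add_apply, add_smul]
    module
  map_smul' c x := by
    simp only [PiLp.smul_apply, smul_eq_mul, RingHom.id_apply, mul_smul]
    module

/-- The seven Clifford endomorphisms e_1, …, e_7 (indexed 0,…,6). -/
def cliff : Fin 7 → (Δ →ₗ[ℝ] Δ) :=
  ![  E 0 7 + E 1 6 - E 2 5 - E 3 4,
    - E 0 6 + E 1 7 + E 2 4 - E 3 5,
    - E 0 5 + E 1 4 - E 2 7 + E 3 6,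
    - E 0 4 - E 1 5 - E 2 6 - E 3 7,
    - E 0 2 - E 1 3 + E 4 6 + E 5 7,
      E 0 3 - E 1 2 - E 4 7 + E 5 6,
      E 0 1 - E 2 3 - E 4 5 + E 6 7]

/-- j = e_1 ∘ e_2 ∘ e_3 ∘ e_4 ∘ e_5 ∘ e_6. -/
def jmap : Δ →ₗ[ℝ] Δ :=
  cliff 0 ∘ₗ cliff 1 ∘ₗ cliff 2 ∘ₗ cliff 3 ∘ₗ cliff 4 ∘ₗ cliff 5

/-- Clifford multiplication of a vector x ∈ ℝ^6 on a spinor. -/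
def cm6 (x : EuclideanSpace ℝ (Fin 6)) (φ : Δ) : Δ :=
  ∑ i : Fin 6, x i • cliff i.castSucc φ

/-- Clifford multiplication of a vector x ∈ ℝ^7 on a spinor. -/
def cm7 (x : EuclideanSpace ℝ (Fin 7)) (φ : Δ) : Δ :=
  ∑ i : Fin 7, x i • cliff i φ


/-- Standard basis vector of ℝ^7. -/
def v7 (i : Fin 7) : EuclideanSpace ℝ (Fin 7) := EuclideanSpace.single i (1 : ℝ)

/-- The G₂ 3-form Φ_φ(x,y,z) = ⟨x·y·z·φ, φ⟩ on ℝ^7. -/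
def PhiP (φ : Δ) (x y z : EuclideanSpace ℝ (Fin 7)) : ℝ :=
  ⟪cm7 x (cm7 y (cm7 z φ)), φ⟫

/-- Action of a trilinear form on ℝ^7 on a spinor:
τ·χ := Σ_{i<j<k} τ(v_i,v_j,v_k) e_i(e_j(e_k(χ))). -/
def tact7 (τ : EuclideanSpace ℝ (Fin 7) → EuclideanSpace ℝ (Fin 7) →
    EuclideanSpace ℝ (Fin 7) → ℝ) (χ : Δ) : Δ :=
  ∑ i : Fin 7, ∑ j : Fin 7, ∑ k : Fin 7,
    if i < j ∧ j < k then
      τ (v7 i) (v7 j) (v7 k) • cliff i (cliff j (cliff k χ))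
    else 0

/-- Action of a bilinear form on ℝ^7 on a spinor:
σ·χ := Σ_{i<j} σ(v_i,v_j) e_i(e_j(χ)). -/
def bact7 (σ : EuclideanSpace ℝ (Fin 7) → EuclideanSpace ℝ (Fin 7) → ℝ) (χ : Δ) : Δ :=
  ∑ i : Fin 7, ∑ j : Fin 7,
    if i < j then σ (v7 i) (v7 j) • cliff i (cliff j χ) else 0

/-!
Multiplication by vectors on a unit spinor `φ` is an isometric embedding of the vectors into the
hyperplane orthogonal to `φ`, and it is onto because there is just one more spinor dimension than
vector dimensions. The spinor `-x · y · φ - ⟪x, y⟫ • φ` is orthogonal to `φ`, so it is `w · φ` for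
some vector `w`; its inner product with `z · φ` is `Φ_φ(x, y, z)`, which forces `w = x × y`.
-/

open Module

/-- The action `c` of the vectors of `V` on the spinors of `S` is an orthogonal Clifford action:
it satisfies the Clifford relations with the sign convention `x · x = -⟪x, x⟫`, stated here in
polarized form, and vectors act by skew-adjoint endomorphisms. -/
structure IsOrthogonalCliffordAction {V S : Type*}
    [NormedAddCommGroup V] [InnerProductSpace ℝ V] [NormedAddCommGroup S] [InnerProductSpace ℝ S]
    (c : V →ₗ[ℝ] S →ₗ[ℝ] S) : Prop where
  apply_apply_add_swap : ∀ x y s, c x (c y s) + c y (c x s) = (-2 * ⟪x, y⟫) • s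
  inner_apply_left : ∀ x s t, ⟪c x s, t⟫ = -⟪s, c x t⟫

/-- The trilinear form `⟪x · y · z · φ, φ⟫` that a spinor `φ` induces on the vectors acting on it:
the counterpart of `PhiP` for an arbitrary action. -/
def spinorForm {V S : Type*}
    [AddCommGroup V] [Module ℝ V] [NormedAddCommGroup S] [InnerProductSpace ℝ S]
    (c : V →ₗ[ℝ] S →ₗ[ℝ] S) (φ : S) (x y z : V) : ℝ :=
  ⟪c x (c y (c z φ)), φ⟫

namespace IsOrthogonalCliffordAction

variable {V S : Type*} [NormedAddCommGroup V] [InnerProductSpace ℝ V]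
  [NormedAddCommGroup S] [InnerProductSpace ℝ S] {c : V →ₗ[ℝ] S →ₗ[ℝ] S}

theorem of_basis {ι : Type*} (b : Basis ι ℝ V)
    (h_anticomm : ∀ i j s, c (b i) (c (b j) s) + c (b j) (c (b i) s) = (-2 * ⟪b i, b j⟫) • s)
    (h_skew : ∀ i s t, ⟪c (b i) s, t⟫ = -⟪s, c (b i) t⟫) :
    IsOrthogonalCliffordAction c where
  apply_apply_add_swap x y s := by
    let product : V →ₗ[ℝ] V →ₗ[ℝ] End ℝ S := (LinearMap.mul ℝ (End ℝ S)).compl₁₂ c c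
    let scalar : V →ₗ[ℝ] V →ₗ[ℝ] End ℝ S :=
      ((-2 : ℝ) • innerₗ V).compr₂ (Algebra.linearMap ℝ (End ℝ S))
    have h_eq : product + product.flip = scalar :=
      LinearMap.ext_basis b b fun i j => LinearMap.ext (h_anticomm i j)
    exact congr($h_eq x y s)
  inner_apply_left x s t := by
    induction b.mem_span x using Submodule.span_induction with
    | mem _ h =>
      obtain ⟨i, rfl⟩ := h
      exact h_skew i s t
    | zero => simp
    | add x y _ _ hx hy =>
      simp only [map_add, LinearMap.add_apply, inner_add_left, inner_add_right, hx, hy, neg_add]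
    | smul a x _ hx =>
      simp only [map_smul, LinearMap.smul_apply, real_inner_smul_left, real_inner_smul_right, hx,
        mul_neg]

theorem apply_apply_self (hc : IsOrthogonalCliffordAction c) (x : V) (s : S) :
    c x (c x s) = -⟪x, x⟫ • s := by
  linear_combination (norm := module) (2⁻¹ : ℝ) • hc.apply_apply_add_swap x x s

theorem inner_apply_self (hc : IsOrthogonalCliffordAction c) (x : V) (s : S) :
    ⟪c x s, s⟫ = 0 := by
  have h := hc.inner_apply_left x s s
  rw [real_inner_comm (c x s) s] at h
  linarith

theorem inner_apply_apply (hc : IsOrthogonalCliffordAction c) (x y : V) (s : S) :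
    ⟪c x s, c y s⟫ = ⟪x, y⟫ * ⟪s, s⟫ := by
  have h := congr(⟪$(hc.apply_apply_add_swap x y s), s⟫)
  rw [inner_add_left, real_inner_smul_left, hc.inner_apply_left x (c y s),
    hc.inner_apply_left y (c x s), real_inner_comm (c x s)] at h
  linarith

theorem spinorForm_self_left (hc : IsOrthogonalCliffordAction c) (φ : S) (x z : V) :
    spinorForm c φ x x z = 0 := by
  rw [spinorForm, hc.apply_apply_self, real_inner_smul_left, hc.inner_apply_self, mul_zero]

theorem spinorForm_self_right (hc : IsOrthogonalCliffordAction c) (φ : S) (x y : V) :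
    spinorForm c φ x y y = 0 := by
  rw [spinorForm, hc.apply_apply_self, map_smul, real_inner_smul_left, hc.inner_apply_self,
    mul_zero]

theorem spinorForm_self_outer (hc : IsOrthogonalCliffordAction c) (φ : S) (x y : V) :
    spinorForm c φ x y x = 0 := by
  rw [spinorForm, hc.inner_apply_left, hc.inner_apply_self, neg_zero]

theorem inner_neg_apply_apply_sub_self (hc : IsOrthogonalCliffordAction c) (φ : S) (x y : V) :
    ⟪-c x (c y φ) - ⟪x, y⟫ • φ, φ⟫ = 0 := by
  rw [inner_sub_left, inner_neg_left, real_inner_smul_left, hc.inner_apply_left,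
    hc.inner_apply_apply, real_inner_comm x y]
  ring

theorem spinorForm_eq_inner (hc : IsOrthogonalCliffordAction c) (φ : S) (x y z : V) :
    spinorForm c φ x y z = ⟪-c x (c y φ) - ⟪x, y⟫ • φ, c z φ⟫ := by
  have h_swap : c y (c x φ) = -c x (c y φ) - ⟪x, y⟫ • φ - ⟪x, y⟫ • φ := by
    linear_combination (norm := module) hc.apply_apply_add_swap x y φ
  calc spinorForm c φ x y z = ⟪c y (c x φ), c z φ⟫ := by
        rw [spinorForm, hc.inner_apply_left, hc.inner_apply_left, neg_neg, real_inner_comm]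
    _ = ⟪-c x (c y φ) - ⟪x, y⟫ • φ, c z φ⟫ := by
        rw [h_swap, inner_sub_left _ (⟪x, y⟫ • φ), real_inner_smul_left, real_inner_comm (c z φ) φ,
          hc.inner_apply_self, mul_zero, sub_zero]

theorem injective_flip_apply (hc : IsOrthogonalCliffordAction c) {φ : S} (hφ : φ ≠ 0) :
    Function.Injective (c.flip φ) := by
  refine (injective_iff_map_eq_zero _).2 fun x hx => ?_
  have h := hc.inner_apply_apply x x φ
  rw [← LinearMap.flip_apply, hx, inner_zero_left, eq_comm, mul_eq_zero] at h
  exact inner_self_eq_zero.1 (h.resolve_right (inner_self_ne_zero.2 hφ))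

theorem range_flip_eq_orthogonal (hc : IsOrthogonalCliffordAction c)
    (hdim : finrank ℝ S = finrank ℝ V + 1) {φ : S} (hφ : φ ≠ 0) :
    (c.flip φ).range = (ℝ ∙ φ)ᗮ := by
  have : FiniteDimensional ℝ S := .of_finrank_eq_succ hdim
  have : Fact (finrank ℝ S = finrank ℝ V + 1) := ⟨hdim⟩
  refine Submodule.eq_of_le_of_finrank_eq ?_ ?_
  · rintro _ ⟨x, rfl⟩
    exact Submodule.mem_orthogonal_singleton_iff_inner_left.2 (hc.inner_apply_self x φ)
  · rw [LinearMap.finrank_range_of_inj (hc.injective_flip_apply hφ),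
      Submodule.finrank_orthogonal_span_singleton (n := finrank ℝ V) hφ]

theorem apply_eq_neg_apply_apply_sub (hc : IsOrthogonalCliffordAction c)
    (hdim : finrank ℝ S = finrank ℝ V + 1) {φ : S} (hφ : ⟪φ, φ⟫ = 1) {x y p : V}
    (hp : ∀ z, ⟪p, z⟫ = spinorForm c φ x y z) :
    c p φ = -c x (c y φ) - ⟪x, y⟫ • φ := by
  have hφ_ne : φ ≠ 0 := by
    rintro rfl
    simp at hφ
  obtain ⟨w, hw⟩ : -c x (c y φ) - ⟪x, y⟫ • φ ∈ (c.flip φ).range := by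
    rw [hc.range_flip_eq_orthogonal hdim hφ_ne, Submodule.mem_orthogonal_singleton_iff_inner_left]
    exact hc.inner_neg_apply_apply_sub_self φ x y
  have hpw : p = w := ext_inner_right ℝ fun z => by
    rw [hp, hc.spinorForm_eq_inner, ← hw, LinearMap.flip_apply, hc.inner_apply_apply, hφ, mul_one]
  rw [hpw, ← hw, LinearMap.flip_apply]

end IsOrthogonalCliffordAction

theorem cross_product_clifford_general {V S : Type*} [NormedAddCommGroup V]
    [InnerProductSpace ℝ V] [NormedAddCommGroup S] [InnerProductSpace ℝ S]
    {c : V →ₗ[ℝ] S →ₗ[ℝ] S} (hc : IsOrthogonalCliffordAction c)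
    (hdim : finrank ℝ S = finrank ℝ V + 1) (φ : S) (hφ : ⟪φ, φ⟫ = 1)
    (cross : V → V → V) (hcross : ∀ x y z, ⟪cross x y, z⟫ = spinorForm c φ x y z) :
    (∀ x y z, spinorForm c φ x x z = 0 ∧ spinorForm c φ x y y = 0 ∧ spinorForm c φ x y x = 0) ∧
    (∀ x y, c (cross x y) φ = -c x (c y φ) - ⟪x, y⟫ • φ) :=
  ⟨fun x y z =>
    ⟨hc.spinorForm_self_left φ x z, hc.spinorForm_self_right φ x y,
      hc.spinorForm_self_outer φ x y⟩,
    fun x y => hc.apply_eq_neg_apply_apply_sub hdim hφ (hcross x y)⟩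

theorem E_apply (i j : Fin 8) (v : Δ) (k : Fin 8) :
    E i j v k = (if k = j then v i else 0) - (if k = i then v j else 0) := by
  simp [E]

theorem inner_E_left (i j : Fin 8) (v w : Δ) : ⟪E i j v, w⟫ = -⟪v, E i j w⟫ := by
  simp only [E, LinearMap.coe_mk, AddHom.coe_mk, inner_sub_left, inner_sub_right,
    real_inner_smul_left, real_inner_smul_right, EuclideanSpace.inner_single_left,
    EuclideanSpace.inner_single_right, map_one, conj_trivial]
  ring

theorem inner_cliff_left (i : Fin 7) (v w : Δ) : ⟪cliff i v, w⟫ = -⟪v, cliff i w⟫ := by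
  fin_cases i <;>
    simp [cliff, inner_add_left, inner_sub_left, inner_add_right, inner_sub_right,
      inner_E_left] <;>
    ring

/-- The endomorphism `cliff i` is a signed permutation of the coordinates, and the permutation is
`k ↦ k ^^^ cliffMask i`, the addition of a fixed vector in `(ℤ/2)³`. -/
def cliffMask : Fin 7 → Fin 8 := ![7, 6, 5, 4, 2, 3, 1]

/-- `cliffSign i k` is the sign with which the signed permutation `cliff i` writes into the
coordinate `k`. -/
def cliffSign : Fin 7 → Fin 8 → ℤ :=
  ![![-1, -1,  1,  1, -1, -1,  1,  1],
    ![ 1, -1, -1,  1,  1, -1, -1,  1],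
    ![ 1, -1,  1, -1,  1, -1,  1, -1],
    ![ 1,  1,  1,  1, -1, -1, -1, -1],
    ![ 1,  1, -1, -1, -1, -1,  1,  1],
    ![-1,  1, -1,  1,  1, -1,  1, -1],
    ![-1,  1,  1, -1,  1, -1, -1,  1]]

theorem cliff_apply (i : Fin 7) (v : Δ) (k : Fin 8) :
    cliff i v k = cliffSign i k * v (k ^^^ cliffMask i) := by
  fin_cases i <;> fin_cases k <;> simp [cliff, E_apply, cliffSign, cliffMask]

theorem cliffSign_mul_cliffSign_self : ∀ (i : Fin 7) (k : Fin 8),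
    cliffSign i k * cliffSign i (k ^^^ cliffMask i) = -1 := by
  decide

theorem cliffSign_mul_cliffSign_of_ne : ∀ (i j : Fin 7) (k : Fin 8), i ≠ j →
    cliffSign i k * cliffSign j (k ^^^ cliffMask i) =
      -(cliffSign j k * cliffSign i (k ^^^ cliffMask j)) := by
  decide

theorem xor_cliffMask_xor_cliffMask_self : ∀ (i : Fin 7) (k : Fin 8),
    k ^^^ cliffMask i ^^^ cliffMask i = k := by
  decide

theorem xor_cliffMask_right_comm : ∀ (i j : Fin 7) (k : Fin 8),
    k ^^^ cliffMask i ^^^ cliffMask j = k ^^^ cliffMask j ^^^ cliffMask i := by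
  decide

theorem cliff_cliff_apply (i j : Fin 7) (v : Δ) (k : Fin 8) :
    cliff i (cliff j v) k =
      (cliffSign i k * cliffSign j (k ^^^ cliffMask i) : ℤ) *
        v (k ^^^ cliffMask i ^^^ cliffMask j) := by
  rw [cliff_apply, cliff_apply, Int.cast_mul, mul_assoc]

theorem cliff_cliff_self (i : Fin 7) (v : Δ) : cliff i (cliff i v) = -v := by
  ext k
  rw [cliff_cliff_apply, cliffSign_mul_cliffSign_self, xor_cliffMask_xor_cliffMask_self]
  simp

theorem cliff_cliff_of_ne {i j : Fin 7} (hij : i ≠ j) (v : Δ) :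
    cliff i (cliff j v) = -cliff j (cliff i v) := by
  ext k
  rw [PiLp.neg_apply, cliff_cliff_apply, cliff_cliff_apply, cliffSign_mul_cliffSign_of_ne i j k hij,
    xor_cliffMask_right_comm, Int.cast_neg, neg_mul]

/-- The Clifford multiplication `cm7`, bundled as a bilinear map. -/
def cm7Linear : EuclideanSpace ℝ (Fin 7) →ₗ[ℝ] Δ →ₗ[ℝ] Δ :=
  LinearMap.mk₂ ℝ cm7
    (fun x y φ => by simp only [cm7, PiLp.add_apply, add_smul, Finset.sum_add_distrib])
    (fun a x φ => by simp only [cm7, PiLp.smul_apply, smul_assoc, Finset.smul_sum])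
    (fun x φ ψ => by simp only [cm7, map_add, smul_add, Finset.sum_add_distrib])
    (fun a x φ => by simp only [cm7, map_smul, smul_comm _ a, Finset.smul_sum])

theorem cm7Linear_apply (x : EuclideanSpace ℝ (Fin 7)) (φ : Δ) : cm7Linear x φ = cm7 x φ :=
  rfl

theorem spinorForm_cm7Linear (φ : Δ) (x y z : EuclideanSpace ℝ (Fin 7)) :
    spinorForm cm7Linear φ x y z = PhiP φ x y z :=
  rfl

theorem cm7Linear_basisFun (i : Fin 7) :
    cm7Linear (EuclideanSpace.basisFun (Fin 7) ℝ i) = cliff i := by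
  ext1 v
  simp [cm7Linear_apply, cm7, ite_smul]

theorem isOrthogonalCliffordAction_cm7Linear : IsOrthogonalCliffordAction cm7Linear := by
  refine .of_basis (EuclideanSpace.basisFun (Fin 7) ℝ).toBasis (fun i j v => ?_) fun i v w => ?_
  · simp only [OrthonormalBasis.coe_toBasis, cm7Linear_basisFun, OrthonormalBasis.inner_eq_ite]
    obtain rfl | hij := eq_or_ne i j
    · rw [cliff_cliff_self, if_pos rfl]
      module
    · rw [cliff_cliff_of_ne hij, if_neg hij, neg_add_cancel, mul_zero, zero_smul]
  · simpa only [OrthonormalBasis.coe_toBasis, cm7Linear_basisFun] using inner_cliff_left i v w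

/-- Lemma 4.2(1), pointwise form: the 3-form Φ_φ is alternating, and the cross
product it defines (⟨x×y, z⟩ = Φ_φ(x,y,z)) satisfies
(x×y)·φ = -x·y·φ - ⟨x,y⟩·φ. -/
theorem cross_product_clifford (φ : Δ) (hφ : ⟪φ, φ⟫ = 1)
    (cross : EuclideanSpace ℝ (Fin 7) → EuclideanSpace ℝ (Fin 7) →
      EuclideanSpace ℝ (Fin 7))
    (hcross : ∀ x y z : EuclideanSpace ℝ (Fin 7), ⟪cross x y, z⟫ = PhiP φ x y z) :
    (∀ x y z : EuclideanSpace ℝ (Fin 7),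
      PhiP φ x x z = 0 ∧ PhiP φ x y y = 0 ∧ PhiP φ x y x = 0) ∧
    (∀ x y : EuclideanSpace ℝ (Fin 7),
      cm7 (cross x y) φ = -cm7 x (cm7 y φ) - ⟪x, y⟫ • φ) := by
  simpa only [spinorForm_cm7Linear, cm7Linear_apply] using
    cross_product_clifford_general isOrthogonalCliffordAction_cm7Linear
      (by simp only [finrank_euclideanSpace, Fintype.card_fin]) φ hφ cross
      (by simpa only [spinorForm_cm7Linear] using hcross)

end
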